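/- Braid relations for co-Pitman transforms: let V be a finite-dimensional real vector space with dual V∨, T > 0, and let α, β ∈ V and α∨, β∨ ∈ V∨ satisfy α∨(α) = β∨(β) = 2, α∨(β) < 0, β∨(α) < 0, and α∨(β)·β∨(α) = 4 cos²(π/n) for some integer n ≥ 2. Then E_α E_β E_α ⋯ = E_β E_α E_β ⋯, where each side is the composition of n alternating factors, as transformations of the set of continuous paths π : [0,T] → V with π(0) = 0. -/

import Mathlib

/-- The Pitman transform associated with a pair `(α, α∨)`:
`P_α π (t) = π t − (inf_{0 ≤ s ≤ t} α∨(π s)) • α`. -/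
noncomputable def pitman {V : Type*} [AddCommGroup V] [Module ℝ V]
    (α : V) (αv : Module.Dual ℝ V) (π : ℝ → V) : ℝ → V :=
  fun t => π t - sInf ((fun s => αv (π s)) '' Set.Icc 0 t) • α

/-- The co-Pitman transform `E_α = κ ∘ P_α ∘ κ` on paths on `[0,T]`:
`E_α π (t) = π t − (inf_{t ≤ s ≤ T} α∨(π s)) • α + (inf_{0 ≤ s ≤ T} α∨(π s)) • α`. -/
noncomputable def copitman {V : Type*} [AddCommGroup V] [Module ℝ V]
    (T : ℝ) (α : V) (αv : Module.Dual ℝ V) (π : ℝ → V) : ℝ → V :=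
  fun t => π t - sInf ((fun s => αv (π s)) '' Set.Icc t T) • α
            + sInf ((fun s => αv (π s)) '' Set.Icc 0 T) • α

/-- `altComp P Q n` is the alternating composition `P ∘ Q ∘ P ∘ ⋯` with `n` factors. -/
def altComp {X : Type*} (P Q : X → X) : ℕ → (X → X)
  | 0 => id
  | n + 1 => P ∘ altComp Q P n

namespace CoPitman

/-- running infimum, written so that it is continuous on the whole line -/
noncomputable def J (f : ℝ → ℝ) (t : ℝ) : ℝ := sInf ((fun u => f (u * t)) '' Set.Icc 0 1)

lemma J_cont {f : ℝ → ℝ} (hf : Continuous f) : Continuous (J f) := by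
  unfold J
  apply IsCompact.continuous_sInf (f := fun t u => f (u * t)) isCompact_Icc
  simp only [Function.HasUncurry.uncurry]
  fun_prop

lemma J_le {f : ℝ → ℝ} (hf : Continuous f) {s t : ℝ} (hs : 0 ≤ s) (hst : s ≤ t) :
    J f t ≤ f s := by
  apply csInf_le
  · exact (isCompact_Icc.image (by fun_prop)).bddBelow
  · rcases eq_or_lt_of_le (hs.trans hst) with h | h
    · refine ⟨0, by simp, ?_⟩
      have : s = 0 := by linarith
      simp [this]
    · refine ⟨s / t, ⟨by positivity, by rw [div_le_one h]; exact hst⟩, ?_⟩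
      simp only
      congr 1
      field_simp

lemma J_att {f : ℝ → ℝ} (hf : Continuous f) {t : ℝ} (ht : 0 ≤ t) :
    ∃ s, 0 ≤ s ∧ s ≤ t ∧ J f t = f s := by
  have hc : IsCompact ((fun u => f (u * t)) '' Set.Icc (0:ℝ) 1) :=
    isCompact_Icc.image (by fun_prop)
  obtain ⟨u, hu, hu'⟩ := hc.sInf_mem ((Set.nonempty_Icc.2 zero_le_one).image _)
  refine ⟨u * t, mul_nonneg hu.1 ht, ?_, hu'.symm⟩
  nlinarith [hu.2]

lemma J_anti {f : ℝ → ℝ} (hf : Continuous f) {s t : ℝ} (hs : 0 ≤ s) (hst : s ≤ t) :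
    J f t ≤ J f s := by
  obtain ⟨r, h0, h1, h2⟩ := J_att hf hs
  rw [h2]
  exact J_le hf h0 (h1.trans hst)

lemma J_congr {f g : ℝ → ℝ} (h : ∀ s, 0 ≤ s → f s = g s) {t : ℝ} (ht : 0 ≤ t) :
    J f t = J g t := by
  unfold J
  congr 1
  apply Set.image_congr
  intro u hu
  exact h _ (mul_nonneg hu.1 ht)

lemma key1 {X : ℝ → ℝ} (hX : Continuous X) {v s0 t : ℝ} (hv : 0 ≤ v) (h1 : v ≤ s0)
    (h2 : s0 ≤ t) : ∃ s, v ≤ s ∧ s ≤ t ∧ X s - 2 * J X s + J X t + J X v ≤ X s0 := by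
  have ha := J_anti hX hv h1
  have hb := J_anti hX (hv.trans h1) h2
  rcases eq_or_lt_of_le (hb.trans ha) with h | h
  · exact ⟨s0, h1, h2, by linarith⟩
  · have ht : 0 ≤ t := by linarith
    obtain ⟨r, hr0, hrt, hr⟩ := J_att hX ht
    have hvr : v ≤ r := by
      by_contra hc
      have := J_le hX hr0 (le_of_not_ge hc)
      linarith
    have hXv := J_le hX hv le_rfl
    have ivt : ∀ r', v ≤ r' → X r' ≤ J X v → ∃ s, v ≤ s ∧ s ≤ r' ∧ X s = J X v := by
      intro r' h1' h2'
      obtain ⟨s, hs, hs'⟩ := intermediate_value_Icc' h1' hX.continuousOn ⟨h2', hXv⟩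
      exact ⟨s, hs.1, hs.2, hs'⟩
    have hc : IsCompact (Set.Icc v t ∩ X ⁻¹' {J X v}) :=
      isCompact_Icc.inter_right (isClosed_singleton.preimage hX)
    have hne : (Set.Icc v t ∩ X ⁻¹' {J X v}).Nonempty := by
      obtain ⟨s, hs1, hs2, hs3⟩ := ivt r hvr (by linarith)
      exact ⟨s, ⟨hs1, hs2.trans hrt⟩, hs3⟩
    obtain ⟨s, ⟨⟨hs1, hs2⟩, hs3⟩, hmin⟩ := hc.exists_isLeast hne
    have hs3 : X s = J X v := hs3
    have hIs : J X v ≤ J X s := by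
      obtain ⟨w, hw0, hws, hw⟩ := J_att hX (hv.trans hs1)
      rw [hw]
      by_contra hlt
      push Not at hlt
      have hvw : v ≤ w := by
        by_contra hc
        have := J_le hX hw0 (le_of_not_ge hc)
        linarith
      obtain ⟨s', a1, a2, a3⟩ := ivt w hvw hlt.le
      have := hmin ⟨⟨a1, by linarith⟩, a3⟩
      have : w = s := by linarith
      rw [this] at hlt
      linarith
    refine ⟨s, hs1, hs2, ?_⟩
    have := J_le hX (hv.trans h1) h2
    linarith

lemma key2 {X : ℝ → ℝ} (hX : Continuous X) {v s0 t : ℝ} (hv : 0 ≤ v) (h1 : v ≤ s0)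
    (h2 : s0 ≤ t) : ∃ s, v ≤ s ∧ s ≤ t ∧ X s ≤ X s0 - 2 * J X s0 + J X t + J X v := by
  have ha := J_anti hX hv h1
  have hb := J_anti hX (hv.trans h1) h2
  rcases eq_or_lt_of_le (hb.trans ha) with h | h
  · exact ⟨s0, h1, h2, by linarith⟩
  · have ht : 0 ≤ t := by linarith
    obtain ⟨r, hr0, hrt, hr⟩ := J_att hX ht
    have hvr : v ≤ r := by
      by_contra hc
      have := J_le hX hr0 (le_of_not_ge hc)
      linarith
    have := J_le hX (hv.trans h1) le_rfl
    exact ⟨r, hvr, hrt, by linarith⟩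

/-- iterated chain infimum -/
noncomputable def Phi : ℕ → (ℕ → ℝ) → (ℝ → ℝ) → (ℝ → ℝ) → (ℝ → ℝ)
  | 0, _, _, _ => fun _ => 0
  | m + 1, p, X, Y => J (fun s => p 0 * X s + Phi m (fun i => p (i + 1)) Y X s)

lemma Phi_cont (m : ℕ) : ∀ (p : ℕ → ℝ) {X Y : ℝ → ℝ}, Continuous X → Continuous Y →
    Continuous (Phi m p X Y) := by
  induction m with
  | zero => intros; exact continuous_const
  | succ m ih =>
    intro p X Y hX hY
    have := ih (fun i => p (i + 1)) hY hX
    exact J_cont (by fun_prop)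

lemma Phi_drop (m : ℕ) : ∀ (p : ℕ → ℝ) (X Y : ℝ → ℝ), p m = 0 →
    Phi (m + 1) p X Y = Phi m p X Y := by
  induction m with
  | zero =>
    intro p X Y h
    funext t
    simp [Phi, h, J]
  | succ m ih =>
    intro p X Y h
    rw [Phi, ih _ Y X h, ← Phi]

lemma J_mul {f : ℝ → ℝ} (hf : Continuous f) {c t : ℝ} (hc : 0 ≤ c) (ht : 0 ≤ t) :
    J (fun s => c * f s) t = c * J f t := by
  have hcf : Continuous (fun s => c * f s) := by fun_prop
  apply le_antisymm
  · obtain ⟨s, h0, h1, h2⟩ := J_att hf ht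
    rw [h2]
    exact J_le hcf h0 h1
  · obtain ⟨s, h0, h1, h2⟩ := J_att hcf ht
    rw [h2]
    exact mul_le_mul_of_nonneg_left (J_le hf h0 h1) hc

lemma Phi_even (b : ℝ) {X Y : ℝ → ℝ} (hX : Continuous X) (hY : Continuous Y) (k : ℕ) :
    ∀ (p : ℕ → ℝ), (∀ i, p (2 * i + 2) = b * p (2 * i + 1) - p (2 * i)) →
      (∀ i, i ≤ 2 * k → 0 ≤ p i) → ∀ t, 0 ≤ t →
      Phi (2 * k) p (fun s => X s - 2 * J X s) (fun s => Y s + b * J X s) t + p 0 * J X t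
        = Phi (2 * k + 1) p X Y t := by
  have hJ := J_cont hX
  induction k with
  | zero =>
    intro p _ hp t ht
    simp only [Phi, zero_add, add_zero]
    rw [J_mul hX (hp 0 (by simp)) ht]
  | succ k ih =>
    intro p hrec hp t ht
    have ih' := ih (fun i => p (i + 2))
      (fun i => by have := hrec (i + 1); simpa [mul_add] using this)
      (fun i hi => hp (i + 2) (by omega))
    simp only [zero_add] at ih'
    have hr0 := hrec 0
    simp only [mul_zero, zero_add] at hr0
    have hp0 := hp 0 (by omega)
    rw [show 2 * (k + 1) + 1 = 2 * k + 1 + 1 + 1 by ring, show 2 * (k + 1) = 2 * k + 1 + 1 by ring]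
    rw [Phi, Phi, Phi, Phi]
    simp only [zero_add, add_assoc, Nat.reduceAdd]
    have hX' : Continuous (fun s => X s - 2 * J X s) := by fun_prop
    have hY' : Continuous (fun s => Y s + b * J X s) := by fun_prop
    have hc := Phi_cont (2 * k + 1) (fun i => p (i + 2)) hX hY
    have hc' := Phi_cont (2 * k) (fun i => p (i + 2)) hX' hY'
    set G := Phi (2 * k + 1) (fun i => p (i + 2)) X Y with hG
    set G' := Phi (2 * k) (fun i => p (i + 2)) (fun s => X s - 2 * J X s)
      (fun s => Y s + b * J X s) with hG'
    have hpsi : ∀ s, 0 ≤ s → p 1 * (Y s + b * J X s) + G' s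
        = (p 1 * Y s + G s) + p 0 * J X s := by
      intro s hs
      have := ih' s hs
      rw [hr0] at this
      linear_combination this
    have c1 : Continuous (fun s => p 1 * (Y s + b * J X s) + G' s) := by fun_prop
    have c2 : Continuous (fun s => p 1 * Y s + G s) := by fun_prop
    have d1 := J_cont c1
    have d2 := J_cont c2
    set A' := J (fun s => p 1 * (Y s + b * J X s) + G' s) with hA'
    set A := J (fun s => p 1 * Y s + G s) with hA
    have e1 : Continuous (fun s => p 0 * (X s - 2 * J X s) + A' s) := by fun_prop
    have e2 : Continuous (fun s => p 0 * X s + A s) := by fun_prop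
    apply le_antisymm
    · obtain ⟨s0, hs0, hs1, hs⟩ := J_att e2 ht
      obtain ⟨v, hv0, hv1, hv⟩ := J_att c2 hs0
      obtain ⟨s, hs2, hs3, hk⟩ := key1 hX hv0 hv1 hs1
      have l1 := J_le e1 (hv0.trans hs2) hs3
      have l2 := J_le c1 hv0 hs2
      rw [hs]
      simp only [hpsi v hv0] at l2
      have := mul_le_mul_of_nonneg_left hk hp0
      simp only [← hA, ← hA'] at *
      linarith
    · obtain ⟨s0, hs0, hs1, hs⟩ := J_att e1 ht
      obtain ⟨v, hv0, hv1, hv⟩ := J_att c1 hs0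
      obtain ⟨s, hs2, hs3, hk⟩ := key2 hX hv0 hv1 hs1
      have l1 := J_le e2 (hv0.trans hs2) hs3
      have l2 := J_le c2 hv0 hs2
      rw [hs]
      simp only [hpsi v hv0] at hv
      have := mul_le_mul_of_nonneg_left hk hp0
      simp only [← hA, ← hA'] at *
      linarith

lemma Phi_odd (b : ℝ) {X Y : ℝ → ℝ} (hX : Continuous X) (hY : Continuous Y) (k : ℕ)
    (q : ℕ → ℝ) (h1 : q 1 = b * q 0)
    (hrec : ∀ i, q (2 * i + 3) = b * q (2 * i + 2) - q (2 * i + 1))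
    (hq : ∀ i, i ≤ 2 * k + 1 → 0 ≤ q i) (t : ℝ) (ht : 0 ≤ t) :
    Phi (2 * k + 1) q (fun s => Y s + b * J X s) (fun s => X s - 2 * J X s) t
      = Phi (2 * k + 2) q Y X t := by
  rw [Phi, Phi]
  apply J_congr _ ht
  intro s hs
  have := Phi_even b hX hY k (fun i => q (i + 1)) hrec (fun i hi => hq _ (by omega)) s hs
  simp only [zero_add] at this
  rw [h1] at this
  linear_combination this

lemma altComp_succ {X : Type*} (m : ℕ) : ∀ (P Q : X → X), altComp P Q (m + 1)
    = altComp P Q m ∘ (if Even m then P else Q) := by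
  induction m with
  | zero => intro P Q; rfl
  | succ m ih =>
    intro P Q
    rw [altComp, ih, altComp, Function.comp_assoc]
    congr 2
    by_cases h : Even m <;> simp [h, Nat.even_add_one]

section
variable {V : Type*} [NormedAddCommGroup V] [NormedSpace ℝ V] [FiniteDimensional ℝ V]

/-- globally continuous Pitman transform -/
noncomputable def P (α : V) (αv : Module.Dual ℝ V) (σ : ℝ → V) : ℝ → V :=
  fun t => σ t - J (fun s => αv (σ s)) t • α

lemma dual_cont (αv : Module.Dual ℝ V) {σ : ℝ → V} (h : Continuous σ) :
    Continuous (fun s => αv (σ s)) :=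
  (LinearMap.continuous_of_finiteDimensional αv).comp h

lemma P_cont (α : V) (αv : Module.Dual ℝ V) {σ : ℝ → V} (h : Continuous σ) :
    Continuous (P α αv σ) := by
  have := J_cont (dual_cont αv h)
  unfold P
  fun_prop

lemma altP_cont (m : ℕ) : ∀ (α β : V) (αv βv : Module.Dual ℝ V) {σ : ℝ → V}, Continuous σ →
    Continuous (altComp (P α αv) (P β βv) m σ) := by
  induction m with
  | zero => intro _ _ _ _ σ h; exact h
  | succ m ih => intro α β αv βv σ h; exact P_cont _ _ (ih β α βv αv h)

lemma word (α β : V) (αv βv : Module.Dual ℝ V) (hα : αv α = 2) (hβ : βv β = 2)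
    (p q : ℕ → ℝ) (p0 : p 0 = 1) (q0 : q 0 = 1) (p1 : p 1 = -αv β) (q1 : q 1 = -βv α)
    (pe : ∀ i, p (2 * i + 2) = -βv α * p (2 * i + 1) - p (2 * i))
    (po : ∀ i, p (2 * i + 3) = -αv β * p (2 * i + 2) - p (2 * i + 1))
    (qe : ∀ i, q (2 * i + 2) = -αv β * q (2 * i + 1) - q (2 * i))
    (qo : ∀ i, q (2 * i + 3) = -βv α * q (2 * i + 2) - q (2 * i + 1)) (m : ℕ) :
    (∀ i, i ≤ m → 0 ≤ p i) → (∀ i, i ≤ m → 0 ≤ q i) →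
    ∀ (σ : ℝ → V), Continuous σ → ∀ t, 0 ≤ t →
    altComp (P α αv) (P β βv) (m + 1) σ t
      = σ t - Phi (m + 1) p (fun s => αv (σ s)) (fun s => βv (σ s)) t • α
        - Phi m q (fun s => βv (σ s)) (fun s => αv (σ s)) t • β := by
  induction m with
  | zero =>
    intro _ _ σ _ t _
    simp [altComp, Phi, P, p0]
  | succ m ih =>
    intro hp hq σ hσ t ht
    rw [altComp_succ, Function.comp_apply]
    have hX := dual_cont αv hσ
    have hY := dual_cont βv hσ
    rcases Nat.even_or_odd' m with ⟨k, rfl | rfl⟩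
    · rw [if_neg (by simp [Nat.even_add_one])]
      rw [ih (fun i hi => hp i (by omega)) (fun i hi => hq i (by omega)) _ (P_cont _ _ hσ) t ht]
      have hb : (fun s => βv (P β βv σ s))
          = fun s => βv (σ s) - 2 * J (fun s => βv (σ s)) s := by
        funext s; simp [P, hβ]; ring
      have ha : (fun s => αv (P β βv σ s))
          = fun s => αv (σ s) + -αv β * J (fun s => βv (σ s)) s := by
        funext s; simp [P]; ring
      rw [hb, ha]
      rw [Phi_odd _ hY hX k p (by rw [p1, p0]; ring) po (fun i hi => hp i hi) t ht]
      rw [← Phi_even (-αv β) hY hX k q qe (fun i hi => hq i (by omega)) t ht, q0]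
      simp only [P]
      module
    · rw [if_pos (by simp [Nat.even_add_one])]
      rw [ih (fun i hi => hp i (by omega)) (fun i hi => hq i (by omega)) _ (P_cont _ _ hσ) t ht]
      have hb : (fun s => βv (P α αv σ s))
          = fun s => βv (σ s) + -βv α * J (fun s => αv (σ s)) s := by
        funext s; simp [P]; ring
      have ha : (fun s => αv (P α αv σ s))
          = fun s => αv (σ s) - 2 * J (fun s => αv (σ s)) s := by
        funext s; simp [P, hα]; ring
      rw [hb, ha]
      rw [Phi_odd _ hX hY k q (by rw [q1, q0]; ring) qo (fun i hi => hq i (by omega)) t ht]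
      have := Phi_even (-βv α) hX hY (k + 1) p pe (fun i hi => hp i (by omega)) t ht
      rw [show 2 * (k + 1) = 2 * k + 1 + 1 by ring] at this
      rw [← this, p0]
      simp only [P]
      module

lemma rev_step {T : ℝ} (hT : 0 < T) (α : V) (αv : Module.Dual ℝ V) {ρ σ : ℝ → V}
    (hσ : Continuous σ) (h : ∀ t ∈ Set.Icc 0 T, ρ t = σ (T - t) - σ T) :
    ∀ t ∈ Set.Icc 0 T, copitman T α αv ρ t = P α αv σ (T - t) - P α αv σ T := by
  have hX := dual_cont αv hσ
  have key : ∀ t ∈ Set.Icc 0 T, sInf ((fun s => αv (ρ s)) '' Set.Icc t T)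
      = J (fun s => αv (σ s)) (T - t) - αv (σ T) := by
    intro t ht
    apply IsLeast.csInf_eq
    constructor
    · obtain ⟨s, h0, h1, h2⟩ := J_att hX (show 0 ≤ T - t by linarith [ht.2])
      refine ⟨T - s, ⟨by linarith, by linarith⟩, ?_⟩
      simp only
      rw [h _ ⟨by linarith [ht.1], by linarith⟩, h2]
      simp
    · rintro _ ⟨s, hs, rfl⟩
      simp only
      rw [h _ ⟨by linarith [ht.1, hs.1], hs.2⟩]
      have := J_le hX (show 0 ≤ T - s by linarith [hs.2]) (show T - s ≤ T - t by linarith [hs.1])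
      simp only [map_sub]
      linarith
  intro t ht
  have k0 := key 0 ⟨le_rfl, hT.le⟩
  rw [sub_zero] at k0
  simp only [copitman, P]
  rw [key t ht, k0, h t ht]
  module

lemma rev_word {T : ℝ} (hT : 0 < T) {ρ σ : ℝ → V}
    (hσ : Continuous σ) (h : ∀ t ∈ Set.Icc 0 T, ρ t = σ (T - t) - σ T) (m : ℕ) :
    ∀ (α β : V) (αv βv : Module.Dual ℝ V), ∀ t ∈ Set.Icc 0 T,
      altComp (copitman T α αv) (copitman T β βv) m ρ t
      = altComp (P α αv) (P β βv) m σ (T - t) - altComp (P α αv) (P β βv) m σ T := by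
  induction m with
  | zero => intro _ _ _ _; exact h
  | succ m ih =>
    intro α β αv βv
    exact rev_step hT α αv (altP_cont m β α βv αv hσ) (ih β α βv αv)

end

/-- the Chebyshev-type coefficients -/
noncomputable def ch (r θ : ℝ) (i : ℕ) : ℝ :=
  (if Even i then 1 else r) * (Real.sin ((i + 1) * θ) / Real.sin θ)

lemma ch_spec {r θ a b : ℝ} (hs : 0 < Real.sin θ) (ha : a = 2 * Real.cos θ * r)
    (hb : b * r = 2 * Real.cos θ) :
    ch r θ 0 = 1 ∧ ch r θ 1 = a ∧
    (∀ i, ch r θ (2 * i + 2) = b * ch r θ (2 * i + 1) - ch r θ (2 * i)) ∧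
    (∀ i, ch r θ (2 * i + 3) = a * ch r θ (2 * i + 2) - ch r θ (2 * i + 1)) := by
  have hrc : ∀ x : ℝ, Real.sin ((x + 2) * θ) = 2 * Real.cos θ * Real.sin ((x + 1) * θ)
      - Real.sin (x * θ) := by
    intro x
    rw [show (x + 2) * θ = (x + 1) * θ + θ by ring, show x * θ = (x + 1) * θ - θ by ring,
      Real.sin_add, Real.sin_sub]
    ring
  refine ⟨?_, ?_, ?_, ?_⟩
  · simp [ch, hs.ne']
  · simp only [ch, Nat.not_even_one, if_false]
    have := hrc 0
    norm_num at this ⊢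
    norm_num at this
    rw [this, ha]
    field_simp
  · intro i
    have := hrc (2 * i + 1)
    simp only [ch, Nat.even_add_one, even_two_mul, not_true, not_false_iff, if_true, if_false]
    push_cast
    rw [show (2 * (i:ℝ) + 2 + 1) = 2 * i + 1 + 2 by ring, this]
    field_simp
    linear_combination -Real.sin ((2 * (i:ℝ) + 1 + 1) * θ) * hb
  · intro i
    have := hrc (2 * i + 2)
    simp only [ch, Nat.even_add_one, even_two_mul, not_true, not_false_iff, if_true, if_false]
    push_cast
    rw [show (2 * (i:ℝ) + 3 + 1) = 2 * i + 2 + 2 by ring, this, ha]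
    rw [show (2 * (i:ℝ) + 1 + 1) = 2 * i + 2 by ring]
    field_simp

end CoPitman

open CoPitman in
/-- Braid relations for the co-Pitman transforms: under the same hypotheses as for the
Pitman transforms, `E_α E_β E_α ⋯ = E_β E_α E_β ⋯` (`n` alternating factors each). -/
theorem copitman_braid
    {V : Type*} [NormedAddCommGroup V] [NormedSpace ℝ V] [FiniteDimensional ℝ V]
    (T : ℝ) (hT : 0 < T) (α β : V) (αv βv : Module.Dual ℝ V)
    (hα : αv α = 2) (hβ : βv β = 2)
    (hαβ : αv β < 0) (hβα : βv α < 0)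
    (n : ℕ) (hn : 2 ≤ n)
    (hcos : αv β * βv α = 4 * Real.cos (Real.pi / n) ^ 2)
    (π : ℝ → V) (hcont : ContinuousOn π (Set.Icc 0 T)) (h0 : π 0 = 0) :
    ∀ t ∈ Set.Icc 0 T,
      altComp (copitman T α αv) (copitman T β βv) n π t
        = altComp (copitman T β βv) (copitman T α αv) n π t := by
  intro t ht
  have hn3 : 3 ≤ n := by
    rcases Nat.lt_or_ge 2 n with h | h
    · exact h
    · exfalso
      have : n = 2 := by omega
      subst this
      have := mul_pos_of_neg_of_neg hαβ hβα
      rw [hcos] at this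
      simp at this
  have hn' : (3:ℝ) ≤ n := by exact_mod_cast hn3
  have hpi := Real.pi_pos
  set θ := Real.pi / n with hθ
  have hnθ : n * θ = Real.pi := by rw [hθ]; field_simp
  have hθ0 : 0 < θ := by positivity
  have hθ1 : θ < Real.pi / 2 := by nlinarith
  have hs : 0 < Real.sin θ := Real.sin_pos_of_pos_of_lt_pi hθ0 (by linarith)
  have hc : 0 < Real.cos θ := Real.cos_pos_of_mem_Ioo ⟨by linarith, hθ1⟩
  have ga : 0 < -αv β := by linarith
  have gb : 0 < -βv α := by linarith
  have nonneg : ∀ r : ℝ, 0 < r → ∀ i, i ≤ n - 1 → 0 ≤ ch r θ i := by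
    intro r hr i hi
    have hi' : ((i:ℝ) + 1) ≤ n := by exact_mod_cast (by omega : i + 1 ≤ n)
    have : 0 ≤ Real.sin ((i + 1) * θ) := by
      apply Real.sin_nonneg_of_nonneg_of_le_pi (by positivity)
      rw [← hnθ]
      gcongr
    unfold ch
    split_ifs <;> positivity
  have vanish : ∀ r : ℝ, ch r θ (n - 1) = 0 := by
    intro r
    have : ((n - 1 : ℕ) : ℝ) + 1 = n := by exact_mod_cast (by omega : n - 1 + 1 = n)
    unfold ch
    rw [this, hnθ]
    simp
  obtain ⟨p0, p1, pe, po⟩ := ch_spec (r := -αv β / (2 * Real.cos θ)) (a := -αv β) (b := -βv α)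
    hs (by field_simp) (by field_simp; linear_combination hcos)
  obtain ⟨q0, q1, qe, qo⟩ := ch_spec (r := -βv α / (2 * Real.cos θ)) (a := -βv α) (b := -αv β)
    hs (by field_simp) (by field_simp; linear_combination hcos)
  have np := nonneg (-αv β / (2 * Real.cos θ)) (by positivity)
  have nq := nonneg (-βv α / (2 * Real.cos θ)) (by positivity)
  have vp := vanish (-αv β / (2 * Real.cos θ))
  have vq := vanish (-βv α / (2 * Real.cos θ))
  generalize ch (-αv β / (2 * Real.cos θ)) θ = p at *
  generalize ch (-βv α / (2 * Real.cos θ)) θ = q at *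
  obtain ⟨m, rfl⟩ : ∃ m, n = m + 1 := ⟨n - 1, by omega⟩
  simp only [Nat.add_sub_cancel] at np nq vp vq
  let σ : ℝ → V := fun s => Set.IccExtend hT.le (Set.domRestrict (Set.Icc 0 T) π) (T - s)
  have hσ : Continuous σ := by
    have h1 : Continuous (Set.IccExtend hT.le (Set.domRestrict (Set.Icc 0 T) π)) :=
      (continuousOn_iff_continuous_domRestrict.1 hcont).Icc_extend'
    exact h1.comp (by fun_prop)
  have hπσ : ∀ t ∈ Set.Icc 0 T, π t = σ (T - t) - σ T := by
    intro t ht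
    simp only [σ, sub_sub_cancel, sub_self]
    have hz : (0:ℝ) ∈ Set.Icc 0 T := Set.left_mem_Icc.2 hT.le
    rw [Set.IccExtend_of_mem _ _ ht, Set.IccExtend_of_mem _ _ hz]
    simp [Set.domRestrict, h0]
  rw [rev_word hT hσ hπσ _ α β αv βv t ht, rev_word hT hσ hπσ _ β α βv αv t ht]
  have main : ∀ s, 0 ≤ s → altComp (P α αv) (P β βv) (m + 1) σ s
      = altComp (P β βv) (P α αv) (m + 1) σ s := by
    intro s hs
    rw [word α β αv βv hα hβ p q p0 q0 p1 q1 pe po qe qo m np nq σ hσ s hs,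
      word β α βv αv hβ hα q p q0 p0 q1 p1 qe qo pe po m nq np σ hσ s hs,
      Phi_drop m p _ _ vp, Phi_drop m q _ _ vq]
    module
  rw [main _ (by linarith [ht.2]), main _ hT.le]
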